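/- (Averaged quadratic enhancement for random shears.) Let (Ω, ℱ, P) be a probability space and b : Ω × [0,L] → ℝ jointly measurable such that for P-a.e. ω the path y ↦ b(ω,y) is continuous and satisfies ∫₀ᴸ b(ω,y) dy = 0, and such that E[ ‖b(ω,·)‖_∞⁶ ] < ∞, where ‖b(ω,·)‖_∞ = sup_{y∈[0,L]} |b(ω,y)|. Set k(ω) := (1/L)∫₀ᴸ ( ∫₀ˣ b(ω,s) ds )² dx. Then there exist constants C > 0 and δ₀ > 0 such that for all δ ∈ (0, δ₀): | E[ c*(δ·b(ω,·)) ] − c₀ − (c₀ δ²/2)·E[k] | ≤ C δ³. -/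

import Mathlib

open Real Set MeasureTheory intervalIntegral

/-- The principal Neumann eigenvalue `μ_b(λ)` of
`ψ'' + (λ² + λ b(y) + a) ψ = μ ψ` on `(0, L)`, defined through the Rayleigh
quotient variational characterization
`μ_b(λ) = sup { ∫₀ᴸ (−ψ'² + (λ² + λ b + a) ψ²) / ∫₀ᴸ ψ² : ψ ∈ H¹((0,L)), ψ ≠ 0 }`. -/
noncomputable def mu (L a : ℝ) (b : ℝ → ℝ) (l : ℝ) : ℝ :=
  sSup { m : ℝ | ∃ ψ : ℝ → ℝ, ContDiffOn ℝ 1 ψ (Icc 0 L) ∧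
    (∃ y ∈ Icc (0 : ℝ) L, ψ y ≠ 0) ∧
    m = (∫ y in (0 : ℝ)..L, (-(deriv ψ y) ^ 2 + (l ^ 2 + l * b y + a) * (ψ y) ^ 2)) /
        (∫ y in (0 : ℝ)..L, (ψ y) ^ 2) }

/-- The KPP minimal front speed `c*(b) = inf_{λ>0} μ_b(λ)/λ`. -/
noncomputable def cstar (L a : ℝ) (b : ℝ → ℝ) : ℝ :=
  sInf { v : ℝ | ∃ l : ℝ, 0 < l ∧ v = mu L a b l / l }

/-- The sup norm `‖b‖_∞ = sup_{y ∈ [0,L]} |b(y)|` of a shear on the cross-section. -/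
noncomputable def supNorm (L : ℝ) (b : ℝ → ℝ) : ℝ :=
  sSup ((fun y => |b y|) '' Icc 0 L)

/-!
If `G` vanishes at both ends of `[0, L]`, integrating `(G ψ²)'` gives the Picone identity
`∫ (-ψ'² + V ψ²) = ∫ (G' + G² + V) ψ² - ∫ (ψ' - G ψ)²`, so the principal Neumann eigenvalue of
`ψ'' + V ψ` lies between the minimum and the maximum of `G' + G² + V`. Let `V = λ² + λ b + a`,
`F y = ∫₀ʸ b`, `k` the average of `F²`, `η y = k y - ∫₀ʸ F²` and `G = λ (λ η - F)`. Then
`G' + G² + V = λ² (1 + k) + a - 2 λ³ F η + λ⁴ η²`, and optimising over `λ` near `√a` gives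
`c*(b) = 2 √a + √a k + O(‖b‖³)` for small `b`. The elementary bounds `2 √a ≤ c*(b) ≤ 2 √a + ‖b‖`
extend the estimate to all `b`, with a constant depending only on `L` and `a`; it remains to take
`δ b` for `b` and integrate. Measurability in `ω` holds because `c*` and `k` are continuous in the
uniform norm, and a random continuous path with measurable evaluations is the limit of its
Bernstein polynomials, hence a random element of `C([0, L])`.
-/

section Calculus

variable {E : Type*} [NormedAddCommGroup E] [NormedSpace ℝ E] {f f' : ℝ → E} {c d x : ℝ}

lemma hasDerivAt_deriv_of_contDiffOn_Icc (hf : ContDiffOn ℝ 1 f (Icc c d)) (hx : x ∈ Ioo c d) :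
    HasDerivAt f (deriv f x) x :=
  ((hf.differentiableOn one_ne_zero x (Ioo_subset_Icc_self hx)).differentiableAt
    (Icc_mem_nhds hx.1 hx.2)).hasDerivAt

lemma contDiffOn_one_of_hasDerivWithinAt {s : Set ℝ} (hs : UniqueDiffOn ℝ s)
    (hf : ∀ x ∈ s, HasDerivWithinAt f (f' x) s x) (hf' : ContinuousOn f' s) :
    ContDiffOn ℝ 1 f s :=
  (contDiffOn_one_iff_derivWithin hs).2 ⟨fun x hx => (hf x hx).differentiableWithinAt,
    hf'.congr fun x hx => (hf x hx).derivWithin (hs x hx)⟩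

lemma hasDerivWithinAt_integral_Icc [CompleteSpace E] (hf : ContinuousOn f (Icc c d))
    (hx : x ∈ Icc c d) : HasDerivWithinAt (fun u => ∫ s in c..u, f s) (f x) (Icc c d) x := by
  have : Fact (x ∈ Icc c d) := ⟨hx⟩
  exact integral_hasDerivWithinAt_right
    ((hf.mono (Icc_subset_Icc_right hx.2)).intervalIntegrable_of_Icc hx.1)
    (hf.stronglyMeasurableAtFilter_nhdsWithin measurableSet_Icc x) (hf x hx)

lemma norm_integral_le_of_norm_le_Icc {M : ℝ} (hf : ∀ y ∈ Icc c d, ‖f y‖ ≤ M)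
    (hx : x ∈ Icc c d) : ‖∫ s in c..x, f s‖ ≤ M * (d - c) := by
  have hM : 0 ≤ M := (norm_nonneg _).trans (hf x hx)
  calc ‖∫ s in c..x, f s‖ ≤ M * |x - c| := norm_integral_le_of_norm_le_const fun y hy => by
        rw [uIoc_of_le hx.1] at hy
        exact hf y ⟨hy.1.le, hy.2.trans hx.2⟩
    _ ≤ M * (d - c) := by
        rw [abs_of_nonneg (sub_nonneg.2 hx.1)]
        gcongr
        exact hx.2

lemma intervalIntegrable_deriv_pow {f : ℝ → ℝ} (hcd : c < d) (hf : ContDiffOn ℝ 1 f (Icc c d))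
    (n : ℕ) : IntervalIntegrable (fun y => deriv f y ^ n) volume c d := by
  have hcont : ContinuousOn (fun y => derivWithin f (Icc c d) y ^ n) (Icc c d) :=
    (hf.continuousOn_derivWithin (uniqueDiffOn_Icc hcd) le_rfl).pow n
  refine (hcont.intervalIntegrable_of_Icc hcd.le).congr_uIoo fun y hy => ?_
  rw [uIoo_of_le hcd.le] at hy
  simp only [derivWithin_of_mem_nhds (Icc_mem_nhds hy.1 hy.2)]

end Calculus

/-! ### Neumann eigenvalues and Riccati functions -/

/-- The Rayleigh quotient `∫₀ᴸ (-ψ'² + V ψ²) / ∫₀ᴸ ψ²` of the operator `ψ'' + V ψ` on `(0, L)`. -/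
noncomputable def rayleighQuotient (L : ℝ) (V ψ : ℝ → ℝ) : ℝ :=
  (∫ y in (0 : ℝ)..L, (-(deriv ψ y) ^ 2 + V y * ψ y ^ 2)) / ∫ y in (0 : ℝ)..L, ψ y ^ 2

/-- The principal Neumann eigenvalue of `ψ'' + V ψ` on `(0, L)`, with the same `C¹` test functions
as in `mu`. -/
noncomputable def principalEigenvalue (L : ℝ) (V : ℝ → ℝ) : ℝ :=
  sSup {m : ℝ | ∃ ψ : ℝ → ℝ, ContDiffOn ℝ 1 ψ (Icc 0 L) ∧ (∃ y ∈ Icc 0 L, ψ y ≠ 0) ∧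
    m = rayleighQuotient L V ψ}

lemma mu_eq_principalEigenvalue (L a : ℝ) (b : ℝ → ℝ) (l : ℝ) :
    mu L a b l = principalEigenvalue L fun y => l ^ 2 + l * b y + a :=
  rfl

section Riccati

variable {L N : ℝ} {V W G G' ψ : ℝ → ℝ}

lemma integral_sq_pos (hL : 0 < L) (hψ : ContinuousOn ψ (Icc 0 L))
    (hψ0 : ∃ y ∈ Icc 0 L, ψ y ≠ 0) : 0 < ∫ y in (0 : ℝ)..L, ψ y ^ 2 := by
  obtain ⟨y, hy, hy0⟩ := hψ0
  exact integral_pos hL (hψ.pow 2) (fun x _ => sq_nonneg _) ⟨y, hy, by positivity⟩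

lemma intervalIntegrable_mul_sq (hL : 0 < L) (hV : ContinuousOn V (Icc 0 L))
    (hψ : ContinuousOn ψ (Icc 0 L)) :
    IntervalIntegrable (fun y => V y * ψ y ^ 2) volume 0 L :=
  (hV.mul (hψ.pow 2)).intervalIntegrable_of_Icc hL.le

lemma intervalIntegrable_energy (hL : 0 < L) (hV : ContinuousOn V (Icc 0 L))
    (hψ : ContDiffOn ℝ 1 ψ (Icc 0 L)) :
    IntervalIntegrable (fun y => -(deriv ψ y) ^ 2 + V y * ψ y ^ 2) volume 0 L :=
  (intervalIntegrable_deriv_pow hL hψ 2).neg.add (intervalIntegrable_mul_sq hL hV hψ.continuousOn)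

lemma intervalIntegrable_mul_deriv (hL : 0 < L) (hG : ContinuousOn G (Icc 0 L))
    (hψ : ContDiffOn ℝ 1 ψ (Icc 0 L)) :
    IntervalIntegrable (fun y => G y * deriv ψ y) volume 0 L := by
  rw [← uIcc_of_le hL.le] at hG
  simpa only [pow_one] using (intervalIntegrable_deriv_pow hL hψ 1).continuousOn_mul hG

lemma integral_deriv_mul_sq_eq_zero (hL : 0 < L)
    (hG : ∀ x ∈ Icc 0 L, HasDerivWithinAt G (G' x) (Icc 0 L) x) (hG' : ContinuousOn G' (Icc 0 L))
    (hG0 : G 0 = 0) (hGL : G L = 0) (hψ : ContDiffOn ℝ 1 ψ (Icc 0 L)) :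
    ∫ y in (0 : ℝ)..L, (G' y * ψ y ^ 2 + 2 * G y * ψ y * deriv ψ y) = 0 := by
  have hGc : ContinuousOn G (Icc 0 L) := fun x hx => (hG x hx).continuousWithinAt
  have hψc := hψ.continuousOn
  have hderiv : ∀ x ∈ Ioo 0 L,
      HasDerivAt (fun y => G y * ψ y ^ 2) (G' x * ψ x ^ 2 + 2 * G x * ψ x * deriv ψ x) x := by
    intro x hx
    have hGx := (hG x (Ioo_subset_Icc_self hx)).hasDerivAt (Icc_mem_nhds hx.1 hx.2)
    refine (hGx.mul ((hasDerivAt_deriv_of_contDiffOn_Icc hψ hx).pow 2)).congr_deriv ?_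
    simp only [Pi.pow_apply]
    ring
  rw [integral_eq_sub_of_hasDerivAt_of_le hL.le (by fun_prop) hderiv
    ((intervalIntegrable_mul_sq hL hG' hψc).add
      (intervalIntegrable_mul_deriv hL (by fun_prop) hψ)), hG0, hGL]
  simp only [zero_mul, sub_zero]

theorem integral_energy_eq_riccati (hL : 0 < L) (hV : ContinuousOn V (Icc 0 L))
    (hG : ∀ x ∈ Icc 0 L, HasDerivWithinAt G (G' x) (Icc 0 L) x) (hG' : ContinuousOn G' (Icc 0 L))
    (hG0 : G 0 = 0) (hGL : G L = 0) (hψ : ContDiffOn ℝ 1 ψ (Icc 0 L)) :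
    ∫ y in (0 : ℝ)..L, (-(deriv ψ y) ^ 2 + V y * ψ y ^ 2) =
      (∫ y in (0 : ℝ)..L, (G' y + G y ^ 2 + V y) * ψ y ^ 2) -
        ∫ y in (0 : ℝ)..L, (deriv ψ y - G y * ψ y) ^ 2 := by
  have hGc : ContinuousOn G (Icc 0 L) := fun x hx => (hG x hx).continuousWithinAt
  have hψc := hψ.continuousOn
  have hR : IntervalIntegrable (fun y => (G' y + G y ^ 2 + V y) * ψ y ^ 2) volume 0 L :=
    intervalIntegrable_mul_sq hL ((hG'.add (hGc.pow 2)).add hV) hψc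
  have hsq : IntervalIntegrable (fun y => (deriv ψ y - G y * ψ y) ^ 2) volume 0 L := by
    refine (((intervalIntegrable_deriv_pow hL hψ 2).sub (intervalIntegrable_mul_deriv hL
      ((continuousOn_const (c := 2)).mul (hGc.mul hψc)) hψ)).add
        (intervalIntegrable_mul_sq hL (hGc.pow 2) hψc)).congr fun y _ => ?_
    simp only [Pi.mul_apply, Pi.pow_apply]
    ring
  rw [← integral_sub hR hsq, ← sub_eq_zero,
    ← integral_sub (intervalIntegrable_energy hL hV hψ) (hR.sub hsq), ← neg_eq_zero,
    ← intervalIntegral.integral_neg]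
  exact (integral_congr fun y _ => by ring).trans
    (integral_deriv_mul_sq_eq_zero hL hG hG' hG0 hGL hψ)

theorem rayleighQuotient_le_of_riccati (hL : 0 < L) (hV : ContinuousOn V (Icc 0 L))
    (hG : ∀ x ∈ Icc 0 L, HasDerivWithinAt G (G' x) (Icc 0 L) x) (hG' : ContinuousOn G' (Icc 0 L))
    (hG0 : G 0 = 0) (hGL : G L = 0) (hN : ∀ y ∈ Icc 0 L, G' y + G y ^ 2 + V y ≤ N)
    (hψ : ContDiffOn ℝ 1 ψ (Icc 0 L)) (hψ0 : ∃ y ∈ Icc 0 L, ψ y ≠ 0) :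
    rayleighQuotient L V ψ ≤ N := by
  have hGc : ContinuousOn G (Icc 0 L) := fun x hx => (hG x hx).continuousWithinAt
  have hψc := hψ.continuousOn
  rw [rayleighQuotient, div_le_iff₀ (integral_sq_pos hL hψc hψ0),
    integral_energy_eq_riccati hL hV hG hG' hG0 hGL hψ]
  have hsq : 0 ≤ ∫ y in (0 : ℝ)..L, (deriv ψ y - G y * ψ y) ^ 2 :=
    integral_nonneg hL.le fun _ _ => sq_nonneg _
  calc _ ≤ ∫ y in (0 : ℝ)..L, (G' y + G y ^ 2 + V y) * ψ y ^ 2 := sub_le_self _ hsq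
    _ ≤ ∫ y in (0 : ℝ)..L, N * ψ y ^ 2 := by
        refine integral_mono_on hL.le
          (intervalIntegrable_mul_sq hL ((hG'.add (hGc.pow 2)).add hV) hψc)
          (intervalIntegrable_mul_sq hL continuousOn_const hψc) fun y hy => ?_
        gcongr
        exact hN y hy
    _ = N * ∫ y in (0 : ℝ)..L, ψ y ^ 2 := intervalIntegral.integral_const_mul _ _

/-- The square in `integral_energy_eq_riccati` vanishes when `ψ' = G ψ`. -/
theorem exists_le_rayleighQuotient_of_riccati (hL : 0 < L) (hV : ContinuousOn V (Icc 0 L))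
    (hG : ∀ x ∈ Icc 0 L, HasDerivWithinAt G (G' x) (Icc 0 L) x) (hG' : ContinuousOn G' (Icc 0 L))
    (hG0 : G 0 = 0) (hGL : G L = 0) (hN : ∀ y ∈ Icc 0 L, N ≤ G' y + G y ^ 2 + V y) :
    ∃ ψ : ℝ → ℝ, ContDiffOn ℝ 1 ψ (Icc 0 L) ∧ (∃ y ∈ Icc 0 L, ψ y ≠ 0) ∧
      N ≤ rayleighQuotient L V ψ := by
  have hGc : ContinuousOn G (Icc 0 L) := fun x hx => (hG x hx).continuousWithinAt
  let ψ : ℝ → ℝ := fun y => exp (∫ s in (0 : ℝ)..y, G s)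
  have hψ' : ∀ x ∈ Icc 0 L, HasDerivWithinAt ψ (ψ x * G x) (Icc 0 L) x := fun x hx =>
    (hasDerivWithinAt_integral_Icc hGc hx).exp
  have hψc : ContinuousOn ψ (Icc 0 L) := fun x hx => (hψ' x hx).continuousWithinAt
  have hψ : ContDiffOn ℝ 1 ψ (Icc 0 L) :=
    contDiffOn_one_of_hasDerivWithinAt (uniqueDiffOn_Icc hL) hψ' (hψc.mul hGc)
  have hψ0 : ∃ y ∈ Icc 0 L, ψ y ≠ 0 := ⟨0, left_mem_Icc.2 hL.le, (exp_pos _).ne'⟩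
  have hsq : ∫ y in (0 : ℝ)..L, (deriv ψ y - G y * ψ y) ^ 2 = 0 := by
    rw [integral_congr_Ioo_of_le (g := fun _ => (0 : ℝ)) hL.le fun y hy => ?_,
      intervalIntegral.integral_zero]
    have hy' := (hψ' y (Ioo_subset_Icc_self hy)).hasDerivAt (Icc_mem_nhds hy.1 hy.2)
    simp only [hy'.deriv, mul_comm, sub_self, zero_pow two_ne_zero]
  refine ⟨ψ, hψ, hψ0, ?_⟩
  rw [rayleighQuotient, le_div_iff₀ (integral_sq_pos hL hψc hψ0),
    integral_energy_eq_riccati hL hV hG hG' hG0 hGL hψ, hsq, sub_zero,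
    ← intervalIntegral.integral_const_mul]
  refine integral_mono_on hL.le (intervalIntegrable_mul_sq hL continuousOn_const hψc)
    (intervalIntegrable_mul_sq hL ((hG'.add (hGc.pow 2)).add hV) hψc) fun y hy => ?_
  exact mul_le_mul_of_nonneg_right (hN y hy) (sq_nonneg _)

lemma principalEigenvalue_le (hL : 0 ≤ L)
    (hN : ∀ ψ : ℝ → ℝ, ContDiffOn ℝ 1 ψ (Icc 0 L) → (∃ y ∈ Icc 0 L, ψ y ≠ 0) →
      rayleighQuotient L V ψ ≤ N) : principalEigenvalue L V ≤ N := by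
  refine csSup_le ⟨_, 1, contDiffOn_const, ⟨0, left_mem_Icc.2 hL, one_ne_zero⟩, rfl⟩ ?_
  rintro m ⟨ψ, hψ, hψ0, rfl⟩
  exact hN ψ hψ hψ0

lemma rayleighQuotient_le_of_le (hL : 0 < L) (hV : ContinuousOn V (Icc 0 L))
    (hN : ∀ y ∈ Icc 0 L, V y ≤ N) (hψ : ContDiffOn ℝ 1 ψ (Icc 0 L))
    (hψ0 : ∃ y ∈ Icc 0 L, ψ y ≠ 0) : rayleighQuotient L V ψ ≤ N :=
  rayleighQuotient_le_of_riccati (G := 0) (G' := 0) hL hV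
    (fun _ _ => hasDerivWithinAt_const ..) continuousOn_const rfl rfl
    (fun y hy => by simpa using hN y hy) hψ hψ0

lemma rayleighQuotient_le_principalEigenvalue (hL : 0 < L) (hV : ContinuousOn V (Icc 0 L))
    (hψ : ContDiffOn ℝ 1 ψ (Icc 0 L)) (hψ0 : ∃ y ∈ Icc 0 L, ψ y ≠ 0) :
    rayleighQuotient L V ψ ≤ principalEigenvalue L V := by
  obtain ⟨N, hN⟩ := isCompact_Icc.bddAbove_image hV
  refine le_csSup ⟨N, ?_⟩ ⟨ψ, hψ, hψ0, rfl⟩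
  rintro m ⟨φ, hφ, hφ0, rfl⟩
  exact rayleighQuotient_le_of_le hL hV (fun y hy => hN (mem_image_of_mem V hy)) hφ hφ0

theorem principalEigenvalue_le_of_riccati (hL : 0 < L) (hV : ContinuousOn V (Icc 0 L))
    (hG : ∀ x ∈ Icc 0 L, HasDerivWithinAt G (G' x) (Icc 0 L) x) (hG' : ContinuousOn G' (Icc 0 L))
    (hG0 : G 0 = 0) (hGL : G L = 0) (hN : ∀ y ∈ Icc 0 L, G' y + G y ^ 2 + V y ≤ N) :
    principalEigenvalue L V ≤ N :=
  principalEigenvalue_le hL.le fun _ => rayleighQuotient_le_of_riccati hL hV hG hG' hG0 hGL hN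

theorem le_principalEigenvalue_of_riccati (hL : 0 < L) (hV : ContinuousOn V (Icc 0 L))
    (hG : ∀ x ∈ Icc 0 L, HasDerivWithinAt G (G' x) (Icc 0 L) x) (hG' : ContinuousOn G' (Icc 0 L))
    (hG0 : G 0 = 0) (hGL : G L = 0) (hN : ∀ y ∈ Icc 0 L, N ≤ G' y + G y ^ 2 + V y) :
    N ≤ principalEigenvalue L V := by
  obtain ⟨ψ, hψ, hψ0, hle⟩ := exists_le_rayleighQuotient_of_riccati hL hV hG hG' hG0 hGL hN
  exact hle.trans (rayleighQuotient_le_principalEigenvalue hL hV hψ hψ0)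

lemma principalEigenvalue_le_of_le (hL : 0 < L) (hV : ContinuousOn V (Icc 0 L))
    (hN : ∀ y ∈ Icc 0 L, V y ≤ N) : principalEigenvalue L V ≤ N :=
  principalEigenvalue_le hL.le fun _ => rayleighQuotient_le_of_le hL hV hN

lemma average_le_principalEigenvalue (hL : 0 < L) (hV : ContinuousOn V (Icc 0 L)) :
    (∫ y in (0 : ℝ)..L, V y) / L ≤ principalEigenvalue L V := by
  simpa [rayleighQuotient] using rayleighQuotient_le_principalEigenvalue (ψ := fun _ => 1) hL hV
    contDiffOn_const ⟨0, left_mem_Icc.2 hL.le, one_ne_zero⟩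

lemma principalEigenvalue_le_add (hL : 0 < L) (hV : ContinuousOn V (Icc 0 L))
    (hW : ContinuousOn W (Icc 0 L)) (hVW : ∀ y ∈ Icc 0 L, V y ≤ W y + N) :
    principalEigenvalue L V ≤ principalEigenvalue L W + N := by
  refine principalEigenvalue_le hL.le fun ψ hψ hψ0 => ?_
  refine le_trans ?_
    (add_le_add_left (rayleighQuotient_le_principalEigenvalue hL hW hψ hψ0) N)
  have hpos := integral_sq_pos hL hψ.continuousOn hψ0
  rw [rayleighQuotient, rayleighQuotient, div_add' _ _ _ hpos.ne',
    div_le_div_iff_of_pos_right hpos, ← intervalIntegral.integral_const_mul]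
  have hW_int := intervalIntegrable_energy hL hW hψ
  have hN_int := intervalIntegrable_mul_sq hL (continuousOn_const (c := N)) hψ.continuousOn
  rw [← integral_add hW_int hN_int]
  refine integral_mono_on hL.le (intervalIntegrable_energy hL hV hψ) (hW_int.add hN_int) ?_
  intro y hy
  linarith [mul_le_mul_of_nonneg_right (hVW y hy) (sq_nonneg (ψ y))]

lemma principalEigenvalue_congr (hL : 0 ≤ L) (hVW : EqOn V W (Icc 0 L)) :
    principalEigenvalue L V = principalEigenvalue L W := by
  have hquot (ψ : ℝ → ℝ) : rayleighQuotient L V ψ = rayleighQuotient L W ψ := by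
    rw [rayleighQuotient, rayleighQuotient, integral_congr fun y hy => ?_]
    rw [uIcc_of_le hL] at hy
    simp only [hVW hy]
  simp only [principalEigenvalue, hquot]

end Riccati

/-! ### The minimal speed of a deterministic shear -/

section Speed

variable {L a l M e : ℝ} {b B : ℝ → ℝ}

lemma mu_le_mu_add (hL : 0 < L) (hl : 0 ≤ l) (hb : ContinuousOn b (Icc 0 L))
    (hB : ContinuousOn B (Icc 0 L)) (hbB : ∀ y ∈ Icc 0 L, |b y - B y| ≤ e) :
    mu L a b l ≤ mu L a B l + l * e := by
  simp only [mu_eq_principalEigenvalue]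
  refine principalEigenvalue_le_add hL (by fun_prop) (by fun_prop) fun y hy => ?_
  linarith [mul_le_mul_of_nonneg_left (le_of_abs_le (hbB y hy)) hl]

lemma two_mul_sqrt_add_le (ha : 0 ≤ a) (hl : 0 < l) (k : ℝ) :
    2 * √a + √a * k - l * k ^ 2 / 4 ≤ l * (1 + k) + a / l := by
  have hsq : l * (1 + k) + a / l - (2 * √a + √a * k - l * k ^ 2 / 4) =
      (l - √a + k * l / 2) ^ 2 / l := by
    field_simp
    linear_combination (-16) * sq_sqrt ha
  rw [← sub_nonneg, hsq]
  positivity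

lemma add_div_add_average_le_mu_div (hL : 0 < L) (hl : 0 < l) (hb : ContinuousOn b (Icc 0 L)) :
    l + a / l + (∫ y in (0 : ℝ)..L, b y) / L ≤ mu L a b l / l := by
  have havg : (∫ y in (0 : ℝ)..L, (l ^ 2 + l * b y + a)) / L =
      (l + a / l + (∫ y in (0 : ℝ)..L, b y) / L) * l := by
    have hint : IntervalIntegrable b volume 0 L := hb.intervalIntegrable_of_Icc hL.le
    rw [integral_add (intervalIntegrable_const.add (hint.const_mul l)) intervalIntegrable_const,
      integral_add intervalIntegrable_const (hint.const_mul l), intervalIntegral.integral_const,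
      intervalIntegral.integral_const, intervalIntegral.integral_const_mul, smul_eq_mul,
      smul_eq_mul]
    field_simp
    ring
  rw [le_div_iff₀ hl, ← havg]
  exact average_le_principalEigenvalue hL (by fun_prop)

lemma two_mul_sqrt_add_average_le_mu_div (hL : 0 < L) (ha : 0 ≤ a) (hl : 0 < l)
    (hb : ContinuousOn b (Icc 0 L)) :
    2 * √a + (∫ y in (0 : ℝ)..L, b y) / L ≤ mu L a b l / l := by
  have hamgm := two_mul_sqrt_add_le ha hl 0
  linarith [add_div_add_average_le_mu_div (a := a) hL hl hb]

lemma le_cstar {c : ℝ} (h : ∀ l > 0, c ≤ mu L a b l / l) : c ≤ cstar L a b := by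
  refine le_csInf ⟨_, 1, one_pos, rfl⟩ ?_
  rintro v ⟨l, hl, rfl⟩
  exact h l hl

lemma cstar_le_mu_div (hL : 0 < L) (ha : 0 ≤ a) (hl : 0 < l) (hb : ContinuousOn b (Icc 0 L)) :
    cstar L a b ≤ mu L a b l / l := by
  refine csInf_le ⟨2 * √a + (∫ y in (0 : ℝ)..L, b y) / L, ?_⟩ ⟨l, hl, rfl⟩
  rintro v ⟨l, hl, rfl⟩
  exact two_mul_sqrt_add_average_le_mu_div hL ha hl hb

theorem two_mul_sqrt_add_average_le_cstar (hL : 0 < L) (ha : 0 ≤ a)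
    (hb : ContinuousOn b (Icc 0 L)) :
    2 * √a + (∫ y in (0 : ℝ)..L, b y) / L ≤ cstar L a b :=
  le_cstar fun _ hl => two_mul_sqrt_add_average_le_mu_div hL ha hl hb

theorem cstar_le_two_mul_sqrt_add (hL : 0 < L) (ha : 0 < a) (hb : ContinuousOn b (Icc 0 L))
    (hM : ∀ y ∈ Icc 0 L, b y ≤ M) : cstar L a b ≤ 2 * √a + M := by
  have hr : 0 < √a := sqrt_pos.2 ha
  refine (cstar_le_mu_div hL ha.le hr hb).trans ?_
  rw [div_le_iff₀ hr]
  refine principalEigenvalue_le_of_le hL (by fun_prop) fun y hy => ?_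
  linarith [mul_le_mul_of_nonneg_left (hM y hy) hr.le, sq_sqrt ha.le]

lemma cstar_le_cstar_add (hL : 0 < L) (ha : 0 ≤ a) (hb : ContinuousOn b (Icc 0 L))
    (hB : ContinuousOn B (Icc 0 L)) (hbB : ∀ y ∈ Icc 0 L, |b y - B y| ≤ e) :
    cstar L a b ≤ cstar L a B + e := by
  rw [← sub_le_iff_le_add]
  refine le_cstar fun l hl => ?_
  rw [sub_le_iff_le_add]
  calc cstar L a b ≤ mu L a b l / l := cstar_le_mu_div hL ha hl hb
    _ ≤ (mu L a B l + l * e) / l := by gcongr; exact mu_le_mu_add hL hl.le hb hB hbB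
    _ = mu L a B l / l + e := by rw [add_div, mul_div_cancel_left₀ _ hl.ne']

theorem abs_cstar_sub_cstar_le (hL : 0 < L) (ha : 0 ≤ a) (hb : ContinuousOn b (Icc 0 L))
    (hB : ContinuousOn B (Icc 0 L)) (hbB : ∀ y ∈ Icc 0 L, |b y - B y| ≤ e) :
    |cstar L a b - cstar L a B| ≤ e := by
  have hBb : ∀ y ∈ Icc 0 L, |B y - b y| ≤ e := fun y hy => abs_sub_comm (b y) (B y) ▸ hbB y hy
  rw [abs_sub_le_iff]
  constructor
  · linarith [cstar_le_cstar_add hL ha hb hB hbB]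
  · linarith [cstar_le_cstar_add hL ha hB hb hBb]

lemma cstar_congr (hL : 0 ≤ L) (hbB : EqOn b B (Icc 0 L)) : cstar L a b = cstar L a B := by
  have hmu (l : ℝ) : mu L a b l = mu L a B l :=
    principalEigenvalue_congr hL fun y hy => by simp only [hbB hy]
  simp only [cstar, hmu]

end Speed

/-! ### Quadratic enhancement -/

section Enhancement

variable {L a l M : ℝ} {b B : ℝ → ℝ} {y : ℝ}

/-- The quadratic enhancement coefficient `k = (1/L) ∫₀ᴸ (∫₀ˣ b)² dx` of a shear `b`. -/
noncomputable def enhancement (L : ℝ) (b : ℝ → ℝ) : ℝ :=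
  (1 / L) * ∫ x in (0 : ℝ)..L, (∫ s in (0 : ℝ)..x, b s) ^ 2

/-- The function `η(y) = k y - ∫₀ʸ (∫₀ˣ b)² dx`, which measures how far `(∫₀ˣ b)²` is from its
average `k = enhancement L b`; it vanishes at both ends of `[0, L]`. -/
noncomputable def enhancementDefect (L : ℝ) (b : ℝ → ℝ) (y : ℝ) : ℝ :=
  enhancement L b * y - ∫ x in (0 : ℝ)..y, (∫ s in (0 : ℝ)..x, b s) ^ 2

/-- The approximate logarithmic derivative `-l ∫₀ʸ b + l² η` of the principal eigenfunction for
`mu L a b l`. It solves the Riccati equation up to order `l³`. -/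
noncomputable def riccatiCorrector (L : ℝ) (b : ℝ → ℝ) (l y : ℝ) : ℝ :=
  l * (l * enhancementDefect L b y - ∫ s in (0 : ℝ)..y, b s)

lemma enhancement_const_mul (L : ℝ) (b : ℝ → ℝ) (δ : ℝ) :
    enhancement L (fun y => δ * b y) = δ ^ 2 * enhancement L b := by
  simp only [enhancement, intervalIntegral.integral_const_mul, mul_pow]
  ring

lemma enhancement_congr (hL : 0 ≤ L) (hbB : EqOn b B (Icc 0 L)) :
    enhancement L b = enhancement L B := by
  rw [enhancement, enhancement, integral_congr fun x hx => ?_]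
  rw [uIcc_of_le hL] at hx
  rw [integral_congr fun s hs => ?_]
  rw [uIcc_of_le hx.1] at hs
  exact hbB ⟨hs.1, hs.2.trans hx.2⟩

lemma enhancement_nonneg (hL : 0 ≤ L) (b : ℝ → ℝ) : 0 ≤ enhancement L b :=
  mul_nonneg (one_div_nonneg.2 hL) (integral_nonneg hL fun _ _ => sq_nonneg _)

lemma abs_primitive_le (hM : ∀ y ∈ Icc 0 L, |b y| ≤ M) (hy : y ∈ Icc 0 L) :
    |∫ s in (0 : ℝ)..y, b s| ≤ M * L :=
  (norm_integral_le_of_norm_le_Icc (f := b) hM hy).trans_eq (by rw [sub_zero])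

lemma integral_sq_primitive_mem_Icc (hM : ∀ y ∈ Icc 0 L, |b y| ≤ M) (hy : y ∈ Icc 0 L) :
    ∫ x in (0 : ℝ)..y, (∫ s in (0 : ℝ)..x, b s) ^ 2 ∈ Icc 0 ((M * L) ^ 2 * L) := by
  refine ⟨integral_nonneg hy.1 fun _ _ => sq_nonneg _, (le_abs_self _).trans ?_⟩
  refine abs_primitive_le (fun x hx => ?_) hy
  rw [abs_pow]
  exact pow_le_pow_left₀ (abs_nonneg _) (abs_primitive_le hM hx) 2

lemma enhancement_le (hL : 0 < L) (hM : ∀ y ∈ Icc 0 L, |b y| ≤ M) :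
    enhancement L b ≤ (M * L) ^ 2 := by
  rw [enhancement, one_div_mul_eq_div, div_le_iff₀ hL]
  exact (integral_sq_primitive_mem_Icc hM (right_mem_Icc.2 hL.le)).2

lemma abs_enhancementDefect_le (hL : 0 < L) (hM : ∀ y ∈ Icc 0 L, |b y| ≤ M)
    (hy : y ∈ Icc 0 L) : |enhancementDefect L b y| ≤ (M * L) ^ 2 * L := by
  obtain ⟨hint0, hint⟩ := integral_sq_primitive_mem_Icc hM hy
  have hk0 := mul_nonneg (enhancement_nonneg hL.le b) hy.1
  have hk : enhancement L b * y ≤ (M * L) ^ 2 * L :=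
    mul_le_mul (enhancement_le hL hM) hy.2 hy.1 (sq_nonneg _)
  rw [enhancementDefect, abs_le]
  constructor <;> linarith

lemma riccatiCorrector_zero (L : ℝ) (b : ℝ → ℝ) (l : ℝ) : riccatiCorrector L b l 0 = 0 := by
  simp [riccatiCorrector, enhancementDefect]

lemma riccatiCorrector_right (hL : L ≠ 0) (hb0 : ∫ y in (0 : ℝ)..L, b y = 0) (l : ℝ) :
    riccatiCorrector L b l L = 0 := by
  rw [riccatiCorrector, enhancementDefect, enhancement, hb0]
  field_simp
  ring

lemma continuousOn_primitive_sq (hb : ContinuousOn b (Icc 0 L)) :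
    ContinuousOn (fun x => (∫ s in (0 : ℝ)..x, b s) ^ 2) (Icc 0 L) := fun _ hx =>
  ((hasDerivWithinAt_integral_Icc hb hx).continuousWithinAt).pow 2

lemma hasDerivWithinAt_riccatiCorrector (hb : ContinuousOn b (Icc 0 L)) (hy : y ∈ Icc 0 L) :
    HasDerivWithinAt (riccatiCorrector L b l)
      (l * (l * (enhancement L b - (∫ s in (0 : ℝ)..y, b s) ^ 2) - b y)) (Icc 0 L) y := by
  have hη : HasDerivWithinAt (enhancementDefect L b)
      (enhancement L b - (∫ s in (0 : ℝ)..y, b s) ^ 2) (Icc 0 L) y := by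
    have hlin := (hasDerivWithinAt_id y (Icc 0 L)).const_mul (enhancement L b)
    rw [mul_one] at hlin
    exact hlin.sub (hasDerivWithinAt_integral_Icc (continuousOn_primitive_sq hb) hy)
  exact ((hη.const_mul l).sub (hasDerivWithinAt_integral_Icc hb hy)).const_mul l

lemma continuousOn_deriv_riccatiCorrector (hb : ContinuousOn b (Icc 0 L)) :
    ContinuousOn (fun y => l * (l * (enhancement L b - (∫ s in (0 : ℝ)..y, b s) ^ 2) - b y))
      (Icc 0 L) := by
  have hsq := continuousOn_primitive_sq hb
  fun_prop

lemma riccati_riccatiCorrector (L a : ℝ) (b : ℝ → ℝ) (l y : ℝ) :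
    l * (l * (enhancement L b - (∫ s in (0 : ℝ)..y, b s) ^ 2) - b y) +
        riccatiCorrector L b l y ^ 2 + (l ^ 2 + l * b y + a) =
      l ^ 2 * (1 + enhancement L b) + a -
        2 * l ^ 3 * ((∫ s in (0 : ℝ)..y, b s) * enhancementDefect L b y) +
        l ^ 4 * enhancementDefect L b y ^ 2 := by
  rw [riccatiCorrector]
  ring

lemma abs_primitive_mul_enhancementDefect_le (hL : 0 < L) (hM : ∀ y ∈ Icc 0 L, |b y| ≤ M)
    (hy : y ∈ Icc 0 L) :
    |(∫ s in (0 : ℝ)..y, b s) * enhancementDefect L b y| ≤ L * (M * L) ^ 3 := by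
  have hF := abs_primitive_le hM hy
  calc _ = |∫ s in (0 : ℝ)..y, b s| * |enhancementDefect L b y| := abs_mul _ _
    _ ≤ M * L * ((M * L) ^ 2 * L) :=
        mul_le_mul hF (abs_enhancementDefect_le hL hM hy) (abs_nonneg _)
          ((abs_nonneg _).trans hF)
    _ = L * (M * L) ^ 3 := by ring

theorem mu_le_of_abs_le (hL : 0 < L) (hl : 0 ≤ l) (hb : ContinuousOn b (Icc 0 L))
    (hb0 : ∫ y in (0 : ℝ)..L, b y = 0) (hM : ∀ y ∈ Icc 0 L, |b y| ≤ M) :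
    mu L a b l ≤ l ^ 2 * (1 + enhancement L b) + a + 2 * l ^ 3 * (L * (M * L) ^ 3) +
      l ^ 4 * ((M * L) ^ 2 * L) ^ 2 := by
  refine principalEigenvalue_le_of_riccati hL (by fun_prop)
    (fun y hy => hasDerivWithinAt_riccatiCorrector hb hy) (continuousOn_deriv_riccatiCorrector hb)
    (riccatiCorrector_zero L b l) (riccatiCorrector_right hL.ne' hb0 l) fun y hy => ?_
  have hcubic := neg_le_of_abs_le (abs_primitive_mul_enhancementDefect_le hL hM hy)
  have hquartic := sq_le_sq.2 ((abs_enhancementDefect_le hL hM hy).trans (le_abs_self _))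
  rw [riccati_riccatiCorrector]
  linarith [mul_le_mul_of_nonneg_left hcubic (by positivity : 0 ≤ 2 * l ^ 3),
    mul_le_mul_of_nonneg_left hquartic (by positivity : 0 ≤ l ^ 4)]

theorem le_mu_of_abs_le (hL : 0 < L) (hl : 0 ≤ l) (hb : ContinuousOn b (Icc 0 L))
    (hb0 : ∫ y in (0 : ℝ)..L, b y = 0) (hM : ∀ y ∈ Icc 0 L, |b y| ≤ M) :
    l ^ 2 * (1 + enhancement L b) + a - 2 * l ^ 3 * (L * (M * L) ^ 3) ≤ mu L a b l := by
  refine le_principalEigenvalue_of_riccati hL (by fun_prop)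
    (fun y hy => hasDerivWithinAt_riccatiCorrector hb hy) (continuousOn_deriv_riccatiCorrector hb)
    (riccatiCorrector_zero L b l) (riccatiCorrector_right hL.ne' hb0 l) fun y hy => ?_
  have hcubic := le_of_abs_le (abs_primitive_mul_enhancementDefect_le hL hM hy)
  have hquartic : 0 ≤ l ^ 4 * enhancementDefect L b y ^ 2 := by positivity
  rw [riccati_riccatiCorrector]
  linarith [mul_le_mul_of_nonneg_left hcubic (by positivity : 0 ≤ 2 * l ^ 3)]

theorem cstar_le_of_abs_le (hL : 0 < L) (ha : 0 < a) (hb : ContinuousOn b (Icc 0 L))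
    (hb0 : ∫ y in (0 : ℝ)..L, b y = 0) (hM : ∀ y ∈ Icc 0 L, |b y| ≤ M) :
    cstar L a b ≤ 2 * √a + √a * enhancement L b + 2 * a * (L * (M * L) ^ 3) +
      a * √a * ((M * L) ^ 2 * L) ^ 2 := by
  have hr : 0 < √a := sqrt_pos.2 ha
  have ha' := sq_sqrt ha.le
  refine (cstar_le_mu_div hL ha.le hr hb).trans ?_
  rw [div_le_iff₀ hr]
  refine (mu_le_of_abs_le hL hr.le hb hb0 hM).trans_eq ?_
  linear_combination (2 * √a * (L * (M * L) ^ 3) + √a ^ 2 * ((M * L) ^ 2 * L) ^ 2 - 1) * ha'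

/-- Large `l` are not competitive in the infimum, since `mu L a b l / l ≥ l`; for `l ≤ 3 √a` the
eigenvalue expansion applies. -/
theorem le_cstar_of_abs_le (hL : 0 < L) (ha : 0 ≤ a) (hb : ContinuousOn b (Icc 0 L))
    (hb0 : ∫ y in (0 : ℝ)..L, b y = 0) (hM : ∀ y ∈ Icc 0 L, |b y| ≤ M) :
    2 * √a + √a * enhancement L b - √a * enhancement L b ^ 2 - 18 * a * (L * (M * L) ^ 3) ≤
      cstar L a b := by
  have hr : 0 ≤ √a := sqrt_nonneg a
  have hM0 : 0 ≤ M := (abs_nonneg _).trans (hM 0 (left_mem_Icc.2 hL.le))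
  have hrem : 0 ≤ L * (M * L) ^ 3 := by positivity
  refine le_cstar fun l hl => ?_
  rcases le_or_gt l (3 * √a) with hl3 | hl3
  · have hexp : l * (1 + enhancement L b) + a / l - 2 * l ^ 2 * (L * (M * L) ^ 3) ≤
        mu L a b l / l := by
      rw [le_div_iff₀ hl]
      refine le_of_eq_of_le ?_ (le_mu_of_abs_le (a := a) hL hl.le hb hb0 hM)
      field_simp
    have hl_sq : l ^ 2 ≤ 9 * a := by nlinarith [sq_sqrt ha]
    have hquad := two_mul_sqrt_add_le ha hl (enhancement L b)
    linarith [mul_le_mul_of_nonneg_right hl_sq hrem,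
      mul_le_mul_of_nonneg_right hl3 (sq_nonneg (enhancement L b)),
      mul_nonneg hr (sq_nonneg (enhancement L b))]
  · have hlarge : l + a / l ≤ mu L a b l / l := by
      simpa only [hb0, zero_div, add_zero] using
        add_div_add_average_le_mu_div (a := a) hL hl hb
    have hal : 0 ≤ a / l := by positivity
    have hsq : 0 ≤ √a * (1 - enhancement L b + enhancement L b ^ 2) :=
      mul_nonneg hr (by nlinarith [sq_nonneg (enhancement L b - 1 / 2)])
    linarith [mul_nonneg ha hrem]

theorem abs_cstar_sub_le_linear_add_quadratic (hL : 0 < L) (ha : 0 < a)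
    (hb : ContinuousOn b (Icc 0 L)) (hb0 : ∫ y in (0 : ℝ)..L, b y = 0)
    (hM : ∀ y ∈ Icc 0 L, |b y| ≤ M) :
    |cstar L a b - 2 * √a - √a * enhancement L b| ≤ M + √a * (M * L) ^ 2 := by
  have hlower := two_mul_sqrt_add_average_le_cstar hL ha.le hb
  have hupper := cstar_le_two_mul_sqrt_add hL ha hb fun y hy => le_of_abs_le (hM y hy)
  have hk0 := mul_nonneg (sqrt_nonneg a) (enhancement_nonneg hL.le b)
  have hk := mul_le_mul_of_nonneg_left (enhancement_le hL hM) (sqrt_nonneg a)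
  rw [hb0, zero_div, add_zero] at hlower
  rw [abs_le]
  constructor <;> nlinarith [sqrt_nonneg a, sq_nonneg (M * L)]

theorem abs_cstar_sub_le_cubic_add_quartic (hL : 0 < L) (ha : 0 < a)
    (hb : ContinuousOn b (Icc 0 L)) (hb0 : ∫ y in (0 : ℝ)..L, b y = 0)
    (hM : ∀ y ∈ Icc 0 L, |b y| ≤ M) :
    |cstar L a b - 2 * √a - √a * enhancement L b| ≤
      18 * a * L ^ 4 * M ^ 3 + (√a * L ^ 4 + a * √a * L ^ 6) * M ^ 4 := by
  have hM0 : 0 ≤ M := (abs_nonneg _).trans (hM 0 (left_mem_Icc.2 hL.le))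
  have hk_sq : √a * enhancement L b ^ 2 ≤ √a * ((M * L) ^ 2) ^ 2 := by
    gcongr
    exacts [enhancement_nonneg hL.le b, enhancement_le hL hM]
  have hcubic : 0 ≤ a * L ^ 4 * M ^ 3 := by positivity
  have hquartic : 0 ≤ √a * L ^ 4 * M ^ 4 := by positivity
  have hquartic' : 0 ≤ a * √a * L ^ 6 * M ^ 4 := by positivity
  rw [abs_le]
  constructor
  · linarith [le_cstar_of_abs_le hL ha.le hb hb0 hM]
  · linarith [cstar_le_of_abs_le hL ha hb hb0 hM]

theorem exists_abs_cstar_sub_le_mul_cube (hL : 0 < L) (ha : 0 < a) :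
    ∃ K > 0, ∀ (b : ℝ → ℝ) (M : ℝ), ContinuousOn b (Icc 0 L) → ∫ y in (0 : ℝ)..L, b y = 0 →
      (∀ y ∈ Icc 0 L, |b y| ≤ M) →
      |cstar L a b - 2 * √a - √a * enhancement L b| ≤ K * M ^ 3 := by
  refine ⟨18 * a * L ^ 4 + √a * L ^ 4 + a * √a * L ^ 6 + (1 + √a * L ^ 2), by positivity, ?_⟩
  intro b M hb hb0 hM
  have hM0 : 0 ≤ M := (abs_nonneg _).trans (hM 0 (left_mem_Icc.2 hL.le))
  rcases le_total M 1 with hM1 | hM1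
  · have hpow : M ^ 4 ≤ M ^ 3 := pow_le_pow_of_le_one hM0 hM1 (by norm_num)
    calc _ ≤ 18 * a * L ^ 4 * M ^ 3 + (√a * L ^ 4 + a * √a * L ^ 6) * M ^ 4 :=
          abs_cstar_sub_le_cubic_add_quartic hL ha hb hb0 hM
      _ ≤ 18 * a * L ^ 4 * M ^ 3 + (√a * L ^ 4 + a * √a * L ^ 6) * M ^ 3 := by gcongr
      _ ≤ _ := by
        have : 0 ≤ (1 + √a * L ^ 2) * M ^ 3 := by positivity
        linarith
  · have hpow : M ^ 2 ≤ M ^ 3 := pow_le_pow_right₀ hM1 (by norm_num)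
    have hpow' : M ≤ M ^ 3 := le_self_pow₀ hM1 (by norm_num)
    calc _ ≤ M + √a * (M * L) ^ 2 := abs_cstar_sub_le_linear_add_quadratic hL ha hb hb0 hM
      _ = M + √a * L ^ 2 * M ^ 2 := by ring
      _ ≤ M ^ 3 + √a * L ^ 2 * M ^ 3 := by gcongr
      _ ≤ _ := by
        have : 0 ≤ (18 * a * L ^ 4 + √a * L ^ 4 + a * √a * L ^ 6) * M ^ 3 := by positivity
        linarith

end Enhancement

/-! ### Random shears -/

section RandomPath

variable {Ω E : Type*} [MeasurableSpace Ω] {P : Measure Ω} [NormedAddCommGroup E]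
  [NormedSpace ℝ E]

lemma aestronglyMeasurable_of_eval_unitInterval {X : Ω → C(unitInterval, E)}
    (hX : ∀ t, AEStronglyMeasurable (fun ω => X ω t) P) : AEStronglyMeasurable X P := by
  refine aestronglyMeasurable_of_tendsto_ae Filter.atTop (fun n => ?_)
    (ae_of_all _ fun ω => bernsteinApproximation_uniform (X ω))
  refine Finset.aestronglyMeasurable_fun_sum _ fun k _ => ?_
  have hcont : Continuous fun v : E => bernstein n k • ContinuousMap.const unitInterval v :=
    ContinuousMap.continuous_of_continuous_uncurry _ <| by
      change Continuous fun p : E × unitInterval => bernstein n k p.2 • p.1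
      fun_prop
  exact hcont.comp_aestronglyMeasurable (hX _)

lemma aestronglyMeasurable_of_eval_Icc {c d : ℝ} (hcd : c < d) {X : Ω → C(Icc c d, E)}
    (hX : ∀ t, AEStronglyMeasurable (fun ω => X ω t) P) : AEStronglyMeasurable X P := by
  let φ : C(Icc c d, unitInterval) := iccHomeoI c d hcd
  let φinv : C(unitInterval, Icc c d) := (iccHomeoI c d hcd).symm
  have hcomp : AEStronglyMeasurable (fun ω => (X ω).comp φinv) P :=
    aestronglyMeasurable_of_eval_unitInterval fun t => hX (φinv t)
  refine ((ContinuousMap.continuous_precomp φ).comp_aestronglyMeasurable hcomp).congr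
    (ae_of_all _ fun ω => ?_)
  ext t
  exact congrArg (X ω) ((iccHomeoI c d hcd).symm_apply_apply t)

lemma aestronglyMeasurable_functional_of_path {c d : ℝ} (hcd : c < d) {b : Ω → ℝ → E}
    (hmeas : ∀ y ∈ Icc c d, AEStronglyMeasurable (fun ω => b ω y) P)
    (hcont : ∀ᵐ ω ∂P, ContinuousOn (b ω) (Icc c d)) {Φ : (ℝ → E) → ℝ}
    (hΦ : Continuous fun f : C(Icc c d, E) => Φ (IccExtend hcd.le f))
    (hΦ_congr : ∀ ⦃f g : ℝ → E⦄, EqOn f g (Icc c d) → Φ f = Φ g) :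
    AEStronglyMeasurable (fun ω => Φ (b ω)) P := by
  let X (ω : Ω) : C(Icc c d, E) := ContinuousMap.mkD ((Icc c d).domRestrict (b ω)) 0
  have hX : ∀ᵐ ω ∂P, ∀ t : Icc c d, X ω t = b ω t := by
    filter_upwards [hcont] with ω hω t
    exact congrArg (· t) (ContinuousMap.mkD_of_continuousOn hω)
  have hX_meas : AEStronglyMeasurable X P := aestronglyMeasurable_of_eval_Icc hcd fun t =>
    (hmeas t t.2).congr (hX.mono fun ω hω => (hω t).symm)
  refine (hΦ.comp_aestronglyMeasurable hX_meas).congr ?_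
  filter_upwards [hX] with ω hω
  exact hΦ_congr fun y hy => (IccExtend_of_mem _ _ hy).trans (hω ⟨y, hy⟩)

end RandomPath

section PathFunctionals

variable {L a : ℝ} {b : ℝ → ℝ} {y : ℝ}

lemma continuous_cstar_IccExtend (hL : 0 < L) (ha : 0 ≤ a) :
    Continuous fun f : C(Icc 0 L, ℝ) => cstar L a (IccExtend hL.le f) := by
  refine (LipschitzWith.of_dist_le_mul (K := 1) fun f g => ?_).continuous
  rw [NNReal.coe_one, one_mul]
  exact abs_cstar_sub_cstar_le hL ha f.continuous.Icc_extend'.continuousOn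
    g.continuous.Icc_extend'.continuousOn fun y _ =>
      ContinuousMap.dist_apply_le_dist (f := f) (g := g) (projIcc 0 L hL.le y)

lemma continuous_enhancement_IccExtend (hL : 0 ≤ L) :
    Continuous fun f : C(Icc 0 L, ℝ) => enhancement L (IccExtend hL f) := by
  have hext : Continuous fun p : C(Icc 0 L, ℝ) × ℝ => IccExtend hL p.1 p.2 := by
    unfold IccExtend
    fun_prop
  have hext' : Continuous (Function.uncurry fun (p : C(Icc 0 L, ℝ) × ℝ) (s : ℝ) =>
      IccExtend hL p.1 s) :=
    hext.comp ((continuous_fst.comp continuous_fst).prodMk continuous_snd)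
  have hprim : Continuous fun p : C(Icc 0 L, ℝ) × ℝ => ∫ s in (0 : ℝ)..p.2, IccExtend hL p.1 s :=
    continuous_parametric_intervalIntegral_of_continuous hext' continuous_snd
  exact continuous_const.mul
    (continuous_parametric_intervalIntegral_of_continuous' (hprim.pow 2) 0 L)

lemma supNorm_IccExtend (hL : 0 ≤ L) (f : C(Icc 0 L, ℝ)) : supNorm L (IccExtend hL f) = ‖f‖ := by
  simp only [supNorm, sSup_image', IccExtend_val, ContinuousMap.norm_eq_iSup_norm, norm_eq_abs]

lemma supNorm_congr {B : ℝ → ℝ} (hbB : EqOn b B (Icc 0 L)) : supNorm L b = supNorm L B :=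
  congrArg sSup (image_congr fun y hy => by rw [hbB hy])

lemma supNorm_nonneg (L : ℝ) (b : ℝ → ℝ) : 0 ≤ supNorm L b :=
  Real.sSup_nonneg (forall_mem_image.2 fun _ _ => abs_nonneg _)

lemma abs_le_supNorm (hb : ContinuousOn b (Icc 0 L)) (hy : y ∈ Icc 0 L) : |b y| ≤ supNorm L b :=
  le_csSup (isCompact_Icc.bddAbove_image hb.abs) (mem_image_of_mem _ hy)

lemma abs_const_mul_le_abs_mul_supNorm (δ : ℝ) (hb : ContinuousOn b (Icc 0 L))
    (hy : y ∈ Icc 0 L) : |δ * b y| ≤ |δ| * supNorm L b := by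
  rw [abs_mul]
  gcongr
  exact abs_le_supNorm hb hy

theorem exists_abs_cstar_const_mul_sub_le (hL : 0 < L) (ha : 0 < a) :
    ∃ K > 0, ∀ (b : ℝ → ℝ) (δ : ℝ), ContinuousOn b (Icc 0 L) → ∫ y in (0 : ℝ)..L, b y = 0 →
      |cstar L a (fun y => δ * b y) - 2 * √a - 2 * √a * δ ^ 2 / 2 * enhancement L b| ≤
        K * |δ| ^ 3 * supNorm L b ^ 3 := by
  obtain ⟨K, hK, hbound⟩ := exists_abs_cstar_sub_le_mul_cube hL ha
  refine ⟨K, hK, fun b δ hb hb0 => ?_⟩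
  have hδb0 : ∫ y in (0 : ℝ)..L, δ * b y = 0 := by
    rw [intervalIntegral.integral_const_mul, hb0, mul_zero]
  convert hbound (fun y => δ * b y) _ (hb.const_mul δ) hδb0
    fun y hy => abs_const_mul_le_abs_mul_supNorm δ hb hy using 1
  · rw [enhancement_const_mul]
    ring_nf
  · ring

end PathFunctionals

section RandomShear

variable {Ω : Type*} [MeasurableSpace Ω] {P : Measure Ω} {L a : ℝ} {b : Ω → ℝ → ℝ}

lemma integrable_supNorm_pow_of_le [IsFiniteMeasure P] {m n : ℕ} (hL : 0 < L)
    (hmeas : ∀ y ∈ Icc 0 L, AEStronglyMeasurable (fun ω => b ω y) P)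
    (hcont : ∀ᵐ ω ∂P, ContinuousOn (b ω) (Icc 0 L)) (hmn : m ≤ n)
    (hmom : Integrable (fun ω => supNorm L (b ω) ^ n) P) :
    Integrable (fun ω => supNorm L (b ω) ^ m) P := by
  have hsup : AEStronglyMeasurable (fun ω => supNorm L (b ω)) P :=
    aestronglyMeasurable_functional_of_path hL hmeas hcont
      (by simpa only [supNorm_IccExtend] using continuous_norm) fun _ _ => supNorm_congr
  have hnorm (ω : Ω) : ‖supNorm L (b ω)‖ = supNorm L (b ω) := norm_of_nonneg (supNorm_nonneg L _)
  simpa only [hnorm] using integrable_norm_pow_of_le hsup hmn (by simpa only [hnorm] using hmom)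

lemma integrable_enhancement (hL : 0 < L)
    (hmeas : ∀ y ∈ Icc 0 L, AEStronglyMeasurable (fun ω => b ω y) P)
    (hcont : ∀ᵐ ω ∂P, ContinuousOn (b ω) (Icc 0 L))
    (hmom : Integrable (fun ω => supNorm L (b ω) ^ 2) P) :
    Integrable (fun ω => enhancement L (b ω)) P := by
  refine (hmom.mul_const (L ^ 2)).mono' (aestronglyMeasurable_functional_of_path hL hmeas hcont
    (continuous_enhancement_IccExtend hL.le) fun _ _ => enhancement_congr hL.le) ?_
  filter_upwards [hcont] with ω hω
  rw [norm_of_nonneg (enhancement_nonneg hL.le _), ← mul_pow]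
  exact enhancement_le hL fun y hy => abs_le_supNorm hω hy

lemma integrable_cstar [IsFiniteMeasure P] (hL : 0 < L) (ha : 0 ≤ a)
    (hmeas : ∀ y ∈ Icc 0 L, AEStronglyMeasurable (fun ω => b ω y) P)
    (hcont : ∀ᵐ ω ∂P, ContinuousOn (b ω) (Icc 0 L))
    {M : Ω → ℝ} (hM : ∀ᵐ ω ∂P, ∀ y ∈ Icc 0 L, |b ω y| ≤ M ω) (hM_int : Integrable M P) :
    Integrable (fun ω => cstar L a (b ω)) P := by
  refine ((integrable_const |cstar L a fun _ => 0|).add hM_int).mono'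
    (aestronglyMeasurable_functional_of_path hL hmeas hcont (continuous_cstar_IccExtend hL ha)
      fun _ _ => cstar_congr hL.le) ?_
  filter_upwards [hcont, hM] with ω hω hMω
  have hdiff : |cstar L a (b ω) - cstar L a fun _ => 0| ≤ M ω :=
    abs_cstar_sub_cstar_le hL ha hω continuousOn_const (by simpa only [sub_zero] using hMω)
  exact sub_le_iff_le_add'.1 ((abs_sub_abs_le_abs_sub _ _).trans hdiff)

theorem stmt6_general (P : Measure Ω) [IsProbabilityMeasure P] (L a : ℝ) (hL : 0 < L) (ha : 0 < a)
    (b : Ω → ℝ → ℝ) (hmeas : ∀ y ∈ Icc 0 L, AEStronglyMeasurable (fun ω => b ω y) P)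
    (hpath : ∀ᵐ ω ∂P, ContinuousOn (b ω) (Icc 0 L) ∧ ∫ y in (0 : ℝ)..L, b ω y = 0)
    (hmom : Integrable (fun ω => supNorm L (b ω) ^ 3) P) :
    ∃ C > 0, ∀ δ : ℝ,
      |(∫ ω, cstar L a (fun y => δ * b ω y) ∂P) - 2 * √a -
          (2 * √a * δ ^ 2 / 2) * ∫ ω, enhancement L (b ω) ∂P| ≤ C * |δ| ^ 3 := by
  obtain ⟨K, hK, hbound⟩ := exists_abs_cstar_const_mul_sub_le hL ha
  have hcont : ∀ᵐ ω ∂P, ContinuousOn (b ω) (Icc 0 L) := hpath.mono fun _ h => h.1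
  have hk : Integrable (fun ω => enhancement L (b ω)) P := integrable_enhancement hL hmeas hcont
    (integrable_supNorm_pow_of_le hL hmeas hcont (by norm_num) hmom)
  have hE : 0 ≤ ∫ ω, supNorm L (b ω) ^ 3 ∂P :=
    integral_nonneg fun ω => pow_nonneg (supNorm_nonneg L _) 3
  refine ⟨K * ∫ ω, supNorm L (b ω) ^ 3 ∂P + 1, by positivity, fun δ => ?_⟩
  have hc : Integrable (fun ω => cstar L a fun y => δ * b ω y) P := by
    refine integrable_cstar hL ha.le (fun y hy => (hmeas y hy).const_mul δ)
      (hcont.mono fun ω hω => hω.const_mul δ)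
      (hcont.mono fun ω hω y hy => abs_const_mul_le_abs_mul_supNorm δ hω hy) (.const_mul ?_ |δ|)
    simpa only [pow_one] using
      integrable_supNorm_pow_of_le (m := 1) hL hmeas hcont (by norm_num) hmom
  have hremainder : ∀ᵐ ω ∂P, ‖cstar L a (fun y => δ * b ω y) - 2 * √a -
      2 * √a * δ ^ 2 / 2 * enhancement L (b ω)‖ ≤ K * |δ| ^ 3 * supNorm L (b ω) ^ 3 := by
    filter_upwards [hpath] with ω ⟨hω, hω0⟩
    exact hbound _ δ hω hω0
  calc _ = ‖∫ ω, (cstar L a (fun y => δ * b ω y) - 2 * √a -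
        2 * √a * δ ^ 2 / 2 * enhancement L (b ω)) ∂P‖ := by
        have hc' : Integrable (fun ω => cstar L a (fun y => δ * b ω y) - 2 * √a) P :=
          hc.sub (integrable_const _)
        rw [integral_sub hc' (hk.const_mul _), integral_sub hc (integrable_const _),
          MeasureTheory.integral_const, probReal_univ, one_smul,
          MeasureTheory.integral_const_mul, norm_eq_abs]
    _ ≤ ∫ ω, K * |δ| ^ 3 * supNorm L (b ω) ^ 3 ∂P :=
        norm_integral_le_of_norm_le (hmom.const_mul _) hremainder
    _ = (K * ∫ ω, supNorm L (b ω) ^ 3 ∂P) * |δ| ^ 3 := by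
        rw [MeasureTheory.integral_const_mul]
        ring
    _ ≤ (K * ∫ ω, supNorm L (b ω) ^ 3 ∂P + 1) * |δ| ^ 3 := by
        gcongr
        exact le_add_of_nonneg_right zero_le_one

end RandomShear

/-- averaged quadratic enhancement for random shears: if the random
shear `b(ω,·)` has a.s. continuous mean-zero paths on `[0,L]` and
`E[‖b‖_∞⁶] < ∞`, then with `k(ω) := (1/L)∫₀ᴸ (∫₀ˣ b(ω,s) ds)² dx`,
`| E[c*(δ b)] − c₀ − (c₀ δ²/2) E[k] | ≤ C δ³` for all small `δ > 0`. -/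
theorem stmt6 {Ω : Type*} [MeasurableSpace Ω] (P : Measure Ω) [IsProbabilityMeasure P]
    (L a : ℝ) (hL : 0 < L) (ha : 0 < a) (b : Ω → ℝ → ℝ)
    (hmeas : Measurable (Function.uncurry b))
    (hpath : ∀ᵐ ω ∂P, ContinuousOn (b ω) (Icc 0 L) ∧ (∫ y in (0 : ℝ)..L, b ω y) = 0)
    (hmom : Integrable (fun ω => (supNorm L (b ω)) ^ 6) P) :
    ∃ C > (0 : ℝ), ∃ δ₀ > (0 : ℝ), ∀ δ : ℝ, 0 < δ → δ < δ₀ →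
      |(∫ ω, cstar L a (fun y => δ * b ω y) ∂P) - 2 * Real.sqrt a -
          (2 * Real.sqrt a * δ ^ 2 / 2) *
            (∫ ω, ((1 / L) * ∫ x in (0 : ℝ)..L, (∫ s in (0 : ℝ)..x, b ω s) ^ 2) ∂P)| ≤
        C * δ ^ 3 := by
  have hmeas' (y : ℝ) (_ : y ∈ Icc 0 L) : AEStronglyMeasurable (fun ω => b ω y) P :=
    (hmeas.comp measurable_prodMk_right).aestronglyMeasurable
  obtain ⟨C, hC, hbound⟩ := stmt6_general P L a hL ha b hmeas' hpath
    (integrable_supNorm_pow_of_le hL hmeas' (hpath.mono fun _ h => h.1) (by norm_num) hmom)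
  exact ⟨C, hC, 1, one_pos, fun δ hδ _ => (hbound δ).trans_eq (by rw [abs_of_pos hδ])⟩
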